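/- arXiv:1805.01559 — 8 statements merged into one kernel-verified Lean document; each statement's English description precedes it below -/
import Mathlib

section
/- Let π^{SINR} be a maxSINR association, let Λ_j = Σ_i λ_i π^{SINR}_{ij}, and set x^{SINR}_{ij} = λ_i π^{SINR}_{ij}. Then x^{SINR} minimizes the cost Σ_{ij} x_{ij}/(μ R_{ij}) over the transportation polytope U(λ, Λ): for every x ∈ U(λ, Λ), Σ_{ij} x^{SINR}_{ij}/(μ R_{ij}) ≤ Σ_{ij} x_{ij}/(μ R_{ij}). -/
open Finset

/-- An association: nonnegative entries, each device's fractions sum to 1. -/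
def IsAssociation {m n : ℕ} (π : Matrix (Fin m) (Fin n) ℝ) : Prop :=
  (∀ i j, 0 ≤ π i j) ∧ (∀ i, ∑ j, π i j = 1)

/-- A maxSINR association: `π i j = 0` whenever `R i j < max_k R i k`,
i.e. whenever some station `k` offers device `i` a strictly larger rate. -/
def IsMaxSINR {m n : ℕ} (R π : Matrix (Fin m) (Fin n) ℝ) : Prop :=
  IsAssociation π ∧ ∀ i j, (∃ k, R i j < R i k) → π i j = 0

/-- Membership in the transportation polytope `U(p, q)`. -/
def InPolytope {m n : ℕ} (p : Fin m → ℝ) (q : Fin n → ℝ)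
    (x : Matrix (Fin m) (Fin n) ℝ) : Prop :=
  (∀ i j, 0 ≤ x i j) ∧ (∀ i, ∑ j, x i j = p i) ∧ (∀ j, ∑ i, x i j = q j)

/-- `x^{SINR}_{ij} = λ_i π^{SINR}_{ij}` minimizes the cost
`∑_{ij} x_{ij}/(μ R_{ij})` over the transportation polytope `U(λ, Λ)`. -/
theorem stmt_3 (m n : ℕ) (hm : 0 < m) (hn : 0 < n)
    (lam : Fin m → ℝ) (hlam : ∀ i, 0 < lam i)
    (μ : ℝ) (hμ : 0 < μ)
    (R : Matrix (Fin m) (Fin n) ℝ) (hR : ∀ i j, 0 < R i j)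
    (πS : Matrix (Fin m) (Fin n) ℝ) (hS : IsMaxSINR R πS)
    (Λ : Fin n → ℝ) (hΛ : ∀ j, Λ j = ∑ i, lam i * πS i j)
    (xS : Matrix (Fin m) (Fin n) ℝ) (hxS : ∀ i j, xS i j = lam i * πS i j)
    (x : Matrix (Fin m) (Fin n) ℝ) (hx : InPolytope lam Λ x) :
    ∑ i, ∑ j, xS i j / (μ * R i j) ≤ ∑ i, ∑ j, x i j / (μ * R i j) := by
  obtain ⟨⟨_, h1⟩, h2⟩ := hS
  obtain ⟨hx0, hxr, _⟩ := hx
  haveI : Nonempty (Fin n) := ⟨⟨0, hn⟩⟩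
  refine Finset.sum_le_sum fun i _ => ?_
  obtain ⟨k, hk⟩ := Finite.exists_max (fun j => R i j)
  have hL : ∑ j, xS i j / (μ * R i j) = lam i / (μ * R i k) := by
    have : ∀ j, xS i j / (μ * R i j) = lam i / (μ * R i k) * πS i j := by
      intro j
      rw [hxS]
      by_cases h : R i j < R i k
      · simp [h2 i j ⟨k, h⟩]
      · rw [le_antisymm (hk j) (not_lt.mp h)]
        ring
    simp_rw [this]
    rw [← Finset.mul_sum, h1, mul_one]
  rw [hL, ← hxr i, Finset.sum_div]
  refine Finset.sum_le_sum fun j _ => ?_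
  exact div_le_div_of_nonneg_left (hx0 i j) (mul_pos hμ (hR i j))
    (mul_le_mul_of_nonneg_left (hk j) hμ.le)
end

section
/- (Lemma 1) Let π^{SINR} be a maxSINR association and let Λ_j = Σ_i λ_i π^{SINR}_{ij}. Suppose x* minimizes Σ_{ij} x_{ij}/(μ R_{ij}) over the transportation polytope U(λ, Λ). Then π*_{ij} = x*_{ij}/λ_i is an association (π*_{ij} ≥ 0 and Σ_j π*_{ij} = 1 for every i), and π* minimizes the total load: for every association π, Σ_j ρ_j(π*) ≤ Σ_j ρ_j(π). -/
open Finset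

/-- Load of RRH `j` under association `π`. -/
noncomputable def load {m n : ℕ} (lam : Fin m → ℝ) (μ : ℝ)
    (R : Matrix (Fin m) (Fin n) ℝ) (π : Matrix (Fin m) (Fin n) ℝ) (j : Fin n) : ℝ :=
  ∑ i, lam i / (μ * R i j) * π i j

/-- Lemma 1: if `x*` minimizes `∑_{ij} x_{ij}/(μ R_{ij})` over
`U(λ, Λ)` with `Λ_j = ∑_i λ_i π^{SINR}_{ij}`, then `π*_{ij} = x*_{ij}/λ_i`
is an association minimizing the total load. -/
theorem stmt_4 (m n : ℕ) (hm : 0 < m) (hn : 0 < n)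
    (lam : Fin m → ℝ) (hlam : ∀ i, 0 < lam i)
    (μ : ℝ) (hμ : 0 < μ)
    (R : Matrix (Fin m) (Fin n) ℝ) (hR : ∀ i j, 0 < R i j)
    (πS : Matrix (Fin m) (Fin n) ℝ) (hS : IsMaxSINR R πS)
    (Λ : Fin n → ℝ) (hΛ : ∀ j, Λ j = ∑ i, lam i * πS i j)
    (xstar : Matrix (Fin m) (Fin n) ℝ)
    (hfeas : InPolytope lam Λ xstar)
    (hopt : ∀ x, InPolytope lam Λ x →
      ∑ i, ∑ j, xstar i j / (μ * R i j) ≤ ∑ i, ∑ j, x i j / (μ * R i j))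
    (πstar : Matrix (Fin m) (Fin n) ℝ)
    (hπstar : ∀ i j, πstar i j = xstar i j / lam i) :
    IsAssociation πstar ∧
      ∀ π, IsAssociation π →
        ∑ j, load lam μ R πstar j ≤ ∑ j, load lam μ R π j := by
  have hne : ∀ i, lam i ≠ 0 := fun i => (hlam i).ne'
  obtain ⟨⟨hS0, hS1⟩, hSm⟩ := hS
  obtain ⟨hx0, hx1, hx2⟩ := hfeas
  refine ⟨⟨fun i j => ?_, fun i => ?_⟩, fun π hπ => ?_⟩
  · rw [hπstar]
    exact div_nonneg (hx0 i j) (hlam i).le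
  · simp only [hπstar]
    rw [← Finset.sum_div, hx1, div_self (hne i)]
  obtain ⟨hπ0, hπ1⟩ := hπ
  have h1 := hopt (fun i j => lam i * πS i j)
    ⟨fun i j => mul_nonneg (hlam i).le (hS0 i j),
     fun i => by rw [← Finset.mul_sum, hS1, mul_one],
     fun j => (hΛ j).symm⟩
  have h2 : ∑ j, load lam μ R πstar j = ∑ i, ∑ j, xstar i j / (μ * R i j) := by
    unfold load
    rw [Finset.sum_comm]
    refine Finset.sum_congr rfl fun i _ => Finset.sum_congr rfl fun j _ => ?_
    rw [hπstar]
    have := hne i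
    field_simp
  have h3 : ∑ j, load lam μ R π j = ∑ i, ∑ j, lam i / (μ * R i j) * π i j := by
    unfold load
    rw [Finset.sum_comm]
  rw [h2, h3]
  refine h1.trans (Finset.sum_le_sum fun i _ => ?_)
  haveI : Nonempty (Fin n) := ⟨⟨0, hn⟩⟩
  obtain ⟨k, hk⟩ := Finite.exists_max (R i)
  have hA : ∑ j, lam i * πS i j / (μ * R i j) = lam i / (μ * R i k) := by
    have : ∀ j, lam i * πS i j / (μ * R i j) = lam i / (μ * R i k) * πS i j := by
      intro j
      rcases (hk j).lt_or_eq with h | h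
      · rw [hSm i j ⟨k, h⟩]; simp
      · rw [h]; ring
    simp only [this]
    rw [← Finset.mul_sum, hS1, mul_one]
  have hB : lam i / (μ * R i k) = ∑ j, lam i / (μ * R i k) * π i j := by
    rw [← Finset.mul_sum, hπ1, mul_one]
  rw [hA, hB]
  refine Finset.sum_le_sum fun j _ => mul_le_mul_of_nonneg_right ?_ (hπ0 i j)
  exact div_le_div_of_nonneg_left (hlam i).le (mul_pos hμ (hR i j))
    (mul_le_mul_of_nonneg_left (hk j) hμ.le)
end

section
/- Let π^{SINR} be a maxSINR association and let Λ_j = Σ_i λ_i π^{SINR}_{ij}. Then the minimum of Σ_{ij} x_{ij}/(μ R_{ij}) over the transportation polytope U(λ, Λ) equals the minimum of the total load Σ_j ρ_j(π) over all associations π. -/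
open Finset

/-- Row-wise optimality of the maxSINR association. -/
theorem row_opt {m n : ℕ} (hn : 0 < n)
    (lam : Fin m → ℝ) (μ : ℝ) (hμ : 0 < μ)
    (R : Matrix (Fin m) (Fin n) ℝ) (hR : ∀ i j, 0 < R i j)
    (πS : Matrix (Fin m) (Fin n) ℝ) (hS : IsMaxSINR R πS)
    (x : Matrix (Fin m) (Fin n) ℝ) (hx : ∀ i j, 0 ≤ x i j) (hxs : ∀ i, ∑ j, x i j = lam i) :
    ∑ i, ∑ j, lam i * πS i j / (μ * R i j) ≤ ∑ i, ∑ j, x i j / (μ * R i j) := by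
  refine Finset.sum_le_sum fun i _ => ?_
  haveI : Nonempty (Fin n) := ⟨⟨0, hn⟩⟩
  obtain ⟨k, hk⟩ := Finite.exists_max (fun j => R i j)
  have h1 : ∑ j, lam i * πS i j / (μ * R i j) = ∑ j, πS i j * (lam i / (μ * R i k)) := by
    refine Finset.sum_congr rfl fun j _ => ?_
    rcases (hk j).lt_or_eq with h | h
    · rw [hS.2 i j ⟨k, h⟩]; simp
    · rw [h]; ring
  rw [h1, ← Finset.sum_mul, hS.1.2 i, one_mul, ← hxs i, Finset.sum_div]
  refine Finset.sum_le_sum fun j _ => ?_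
  exact div_le_div_of_nonneg_left (hx i j) (mul_pos hμ (hR i j))
    (mul_le_mul_of_nonneg_left (hk j) hμ.le)

theorem total_load_eq {m n : ℕ} (lam : Fin m → ℝ) (μ : ℝ)
    (R π : Matrix (Fin m) (Fin n) ℝ) :
    ∑ j, load lam μ R π j = ∑ i, ∑ j, lam i * π i j / (μ * R i j) := by
  unfold load
  rw [Finset.sum_comm]
  exact Finset.sum_congr rfl fun i _ => Finset.sum_congr rfl fun j _ => by ring

/-- the minimum of `∑_{ij} x_{ij}/(μ R_{ij})` over `U(λ, Λ)` (with
`Λ_j = ∑_i λ_i π^{SINR}_{ij}`) equals the minimum total load over all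
associations. -/
theorem stmt_5 (m n : ℕ) (hm : 0 < m) (hn : 0 < n)
    (lam : Fin m → ℝ) (hlam : ∀ i, 0 < lam i)
    (μ : ℝ) (hμ : 0 < μ)
    (R : Matrix (Fin m) (Fin n) ℝ) (hR : ∀ i j, 0 < R i j)
    (πS : Matrix (Fin m) (Fin n) ℝ) (hS : IsMaxSINR R πS)
    (Λ : Fin n → ℝ) (hΛ : ∀ j, Λ j = ∑ i, lam i * πS i j) :
    sInf ((fun x : Matrix (Fin m) (Fin n) ℝ => ∑ i, ∑ j, x i j / (μ * R i j)) ''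
        {x | InPolytope lam Λ x}) =
      sInf ((fun π : Matrix (Fin m) (Fin n) ℝ => ∑ j, load lam μ R π j) ''
        {π | IsAssociation π}) := by
  have hA : ∀ π : Matrix (Fin m) (Fin n) ℝ, IsAssociation π →
      (∀ i j, 0 ≤ lam i * π i j) ∧ ∀ i, ∑ j, lam i * π i j = lam i := fun π h =>
    ⟨fun i j => mul_nonneg (hlam i).le (h.1 i j), fun i => by
      rw [← Finset.mul_sum, h.2 i, mul_one]⟩
  have h1 : IsLeast ((fun x : Matrix (Fin m) (Fin n) ℝ => ∑ i, ∑ j, x i j / (μ * R i j)) ''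
      {x | InPolytope lam Λ x}) (∑ i, ∑ j, lam i * πS i j / (μ * R i j)) := by
    constructor
    · exact ⟨fun i j => lam i * πS i j,
        ⟨(hA πS hS.1).1, (hA πS hS.1).2, fun j => (hΛ j).symm⟩, rfl⟩
    · rintro _ ⟨x, hx, rfl⟩
      exact row_opt hn lam μ hμ R hR πS hS x hx.1 hx.2.1
  have h2 : IsLeast ((fun π : Matrix (Fin m) (Fin n) ℝ => ∑ j, load lam μ R π j) ''
      {π | IsAssociation π}) (∑ i, ∑ j, lam i * πS i j / (μ * R i j)) := by
    constructor
    · exact ⟨πS, hS.1, total_load_eq lam μ R πS⟩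
    · rintro _ ⟨π, hπ, rfl⟩
      simp only [total_load_eq]
      exact row_opt hn lam μ hμ R hR πS hS (fun i j => lam i * π i j) (hA π hπ).1 (hA π hπ).2
  rw [h1.csInf_eq, h2.csInf_eq]
end

section
/- Let C ∈ ℝ^{m×n}, ε > 0, and let p ∈ ℝ^m, q ∈ ℝ^n have strictly positive entries with Σ_i p_i = Σ_j q_j. If π* minimizes the regularized OT objective F_ε over the transportation polytope U(p,q), then π*_{ij} > 0 for all i, j. -/
open Finset

/-- The entropically regularized OT objective `F_ε`; with `Real.log 0 = 0`,
the convention `0·(log 0 − 1) = 0` holds automatically. -/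
noncomputable def regObj {m n : ℕ} (C : Matrix (Fin m) (Fin n) ℝ) (ε : ℝ)
    (x : Matrix (Fin m) (Fin n) ℝ) : ℝ :=
  ∑ i, ∑ j, C i j * x i j + ε * ∑ i, ∑ j, x i j * (Real.log (x i j) - 1)

lemma entry_bound (c ε x y t : ℝ) (hε : 0 < ε) (hx : 0 ≤ x) (hy : 0 ≤ y) (ht : 0 < t)
    (ht1 : t < 1) :
    c * ((1 - t) * x + t * y) + ε * (((1 - t) * x + t * y) *
      (Real.log ((1 - t) * x + t * y) - 1)) ≤
    (1 - t) * (c * x + ε * (x * (Real.log x - 1))) + t * (c * y + ε * (y * (Real.log y - 1))) := by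
  have h := Real.convexOn_mul_log.2 (show x ∈ Set.Ici 0 from hx) (show y ∈ Set.Ici 0 from hy)
    (show 0 ≤ 1 - t by linarith) ht.le (by ring)
  simp only [smul_eq_mul] at h
  have := mul_le_mul_of_nonneg_left h hε.le
  linarith

lemma entry_zero (c ε y t : ℝ) (hy : 0 < y) (ht : 0 < t) :
    c * ((1 - t) * 0 + t * y) + ε * (((1 - t) * 0 + t * y) *
      (Real.log ((1 - t) * 0 + t * y) - 1)) =
    (1 - t) * (c * 0 + ε * (0 * (Real.log 0 - 1))) + t * (c * y + ε * (y * (Real.log y - 1)))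
      + ε * (t * y * Real.log t) := by
  rw [mul_zero, zero_add, Real.log_mul ht.ne' hy.ne']
  ring

lemma regObj_eq {m n : ℕ} (C : Matrix (Fin m) (Fin n) ℝ) (ε : ℝ)
    (x : Matrix (Fin m) (Fin n) ℝ) :
    regObj C ε x = ∑ i, ∑ j, (C i j * x i j + ε * (x i j * (Real.log (x i j) - 1))) := by
  simp only [regObj, Finset.sum_add_distrib, Finset.mul_sum]

/-- for `ε > 0` and balanced strictly positive marginals, any
minimizer of `F_ε` over `U(p, q)` has strictly positive entries. -/
theorem stmt_10 (m n : ℕ) (C : Matrix (Fin m) (Fin n) ℝ) (ε : ℝ) (hε : 0 < ε)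
    (p : Fin m → ℝ) (q : Fin n → ℝ)
    (hp : ∀ i, 0 < p i) (hq : ∀ j, 0 < q j)
    (hbal : ∑ i, p i = ∑ j, q j)
    (xstar : Matrix (Fin m) (Fin n) ℝ)
    (hfeas : InPolytope p q xstar)
    (hopt : ∀ x, InPolytope p q x → regObj C ε xstar ≤ regObj C ε x) :
    ∀ i j, 0 < xstar i j := by
  intro a b
  obtain ⟨h0, hr, hc⟩ := hfeas
  by_contra hneg
  have hab : xstar a b = 0 := le_antisymm (not_lt.mp hneg) (h0 a b)
  obtain ⟨S, hS⟩ : ∃ S, S = ∑ i, p i := ⟨_, rfl⟩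
  have hSpos : 0 < S := hS ▸ Finset.sum_pos (fun i _ => hp i) ⟨a, Finset.mem_univ a⟩
  obtain ⟨y, hy⟩ : ∃ y : Matrix (Fin m) (Fin n) ℝ, ∀ i j, y i j = p i * q j / S :=
    ⟨fun i j => p i * q j / S, fun _ _ => rfl⟩
  have hypos : ∀ i j, 0 < y i j := fun i j => by
    rw [hy]; exact div_pos (mul_pos (hp i) (hq j)) hSpos
  have hyr : ∀ i, ∑ j, y i j = p i := fun i => by
    simp only [hy]
    rw [← Finset.sum_div, ← Finset.mul_sum, ← hbal, ← hS]
    field_simp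
  have hyc : ∀ j, ∑ i, y i j = q j := fun j => by
    simp only [hy]
    rw [← Finset.sum_div, ← Finset.sum_mul, ← hS]
    field_simp
  have key : ∀ t : ℝ, 0 < t → t < 1 →
      0 ≤ (regObj C ε y - regObj C ε xstar) + ε * y a b * Real.log t := by
    intro t ht ht1
    have h1 := hopt (fun i j => (1 - t) * xstar i j + t * y i j) ⟨fun i j =>
        add_nonneg (mul_nonneg (by linarith) (h0 i j)) (mul_nonneg ht.le (hypos i j).le),
      fun i => by
        rw [Finset.sum_add_distrib, ← Finset.mul_sum, ← Finset.mul_sum, hr, hyr]; ring,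
      fun j => by
        rw [Finset.sum_add_distrib, ← Finset.mul_sum, ← Finset.mul_sum, hc, hyc]; ring⟩
    have h2 : regObj C ε (fun i j => (1 - t) * xstar i j + t * y i j) ≤
        (1 - t) * regObj C ε xstar + t * regObj C ε y + ε * (t * y a b * Real.log t) := by
      have e : ε * (t * y a b * Real.log t) = ∑ i, ∑ j,
          if i = a then (if j = b then ε * (t * y a b * Real.log t) else 0) else 0 := by
        rw [Finset.sum_eq_single a]
        · simp
        · intro i _ hi; simp [hi]
        · simp
      rw [e, regObj_eq C ε (fun i j => (1 - t) * xstar i j + t * y i j), regObj_eq C ε xstar,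
        regObj_eq C ε y]
      simp only [Finset.mul_sum, ← Finset.sum_add_distrib]
      apply Finset.sum_le_sum; intro i _
      apply Finset.sum_le_sum; intro j _
      by_cases hij : i = a ∧ j = b
      · obtain ⟨rfl, rfl⟩ := hij
        simp only [if_true, hab]
        exact (entry_zero _ _ _ _ (hypos i j) ht).le
      · have e0 : (if i = a then (if j = b then ε * (t * y a b * Real.log t) else 0) else 0)
            = (0 : ℝ) := by
          split_ifs <;> tauto
        rw [e0, add_zero]
        exact entry_bound _ _ _ _ _ hε (h0 i j) (hypos i j).le ht ht1
    have h3 : 0 ≤ t * ((regObj C ε y - regObj C ε xstar) + ε * y a b * Real.log t) := by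
      linarith
    exact nonneg_of_mul_nonneg_right h3 ht
  have hk : 0 < ε * y a b := mul_pos hε (hypos a b)
  obtain ⟨D, hD⟩ : ∃ D, D = regObj C ε y - regObj C ε xstar := ⟨_, rfl⟩
  have h := key (Real.exp (-((|D| + 1) / (ε * y a b)))) (Real.exp_pos _)
    (by
      have hpos : 0 < (|D| + 1) / (ε * y a b) := by positivity
      rw [Real.exp_lt_one_iff]; linarith)
  rw [Real.log_exp, ← hD, mul_neg, mul_div_cancel₀ _ hk.ne'] at h
  linarith [le_abs_self D]
end

section
/- Let C ∈ ℝ^{m×n}, ε > 0, ξ_{ij} = exp(−C_{ij}/ε), and let p ∈ ℝ^m, q ∈ ℝ^n have nonnegative entries. Suppose π ∈ U(p,q) and there exist a ∈ ℝ^m, b ∈ ℝ^n with strictly positive entries such that π_{ij} = ξ_{ij} a_i b_j for all (i,j). Then π minimizes the regularized OT objective F_ε over U(p,q): F_ε(π) ≤ F_ε(π') for every π' ∈ U(p,q), with equality only if π' = π. -/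
open Finset

/-- a coupling in `U(p, q)` of the scaled form
`π_{ij} = ξ_{ij} a_i b_j` (with `a, b` positive and `ξ` the Gibbs kernel)
minimizes `F_ε` over `U(p, q)`, and is the unique minimizer. -/
theorem stmt_13 (m n : ℕ) (C : Matrix (Fin m) (Fin n) ℝ) (ε : ℝ) (hε : 0 < ε)
    (ξ : Matrix (Fin m) (Fin n) ℝ) (hξ : ∀ i j, ξ i j = Real.exp (-(C i j) / ε))
    (p : Fin m → ℝ) (q : Fin n → ℝ) (hp : ∀ i, 0 ≤ p i) (hq : ∀ j, 0 ≤ q j)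
    (π : Matrix (Fin m) (Fin n) ℝ) (hπ : InPolytope p q π)
    (a : Fin m → ℝ) (b : Fin n → ℝ) (ha : ∀ i, 0 < a i) (hb : ∀ j, 0 < b j)
    (hscale : ∀ i j, π i j = ξ i j * a i * b j) :
    ∀ π', InPolytope p q π' →
      regObj C ε π ≤ regObj C ε π' ∧ (regObj C ε π = regObj C ε π' → π' = π) := by
  intro π' hπ'
  have hpos : ∀ i j, 0 < π i j := fun i j => by
    rw [hscale, hξ]
    exact mul_pos (mul_pos (Real.exp_pos _) (ha i)) (hb j)
  have hlog : ∀ i j, C i j + ε * Real.log (π i j) =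
      ε * (Real.log (a i) + Real.log (b j)) := fun i j => by
    rw [hscale, hξ, Real.log_mul (mul_pos (Real.exp_pos _) (ha i)).ne' (hb j).ne',
      Real.log_mul (Real.exp_pos _).ne' (ha i).ne', Real.log_exp]
    field_simp
    ring
  have hkl : ∀ i j, π i j * InformationTheory.klFun (π' i j / π i j) =
      π' i j * Real.log (π' i j) - π' i j * Real.log (π i j) + π i j - π' i j := fun i j => by
    have hx := hpos i j
    unfold InformationTheory.klFun
    rcases (hπ'.1 i j).eq_or_lt with h | h
    · simp [← h]
    · rw [Real.log_div h.ne' hx.ne']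
      field_simp
  have hnn : ∀ i j, 0 ≤ π i j * InformationTheory.klFun (π' i j / π i j) := fun i j =>
    mul_nonneg (hpos i j).le
      (InformationTheory.klFun_nonneg (div_nonneg (hπ'.1 i j) (hpos i j).le))
  have hA : ∑ i, ∑ j, (π' i j - π i j) * Real.log (a i) = 0 := by
    refine Finset.sum_eq_zero fun i _ => ?_
    rw [← Finset.sum_mul, Finset.sum_sub_distrib, hπ'.2.1, hπ.2.1, sub_self, zero_mul]
  have hB : ∑ i, ∑ j, (π' i j - π i j) * Real.log (b j) = 0 := by
    rw [Finset.sum_comm]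
    refine Finset.sum_eq_zero fun j _ => ?_
    rw [← Finset.sum_mul, Finset.sum_sub_distrib, hπ'.2.2, hπ.2.2, sub_self, zero_mul]
  have key : regObj C ε π' = regObj C ε π +
      ε * ∑ i, ∑ j, π i j * InformationTheory.klFun (π' i j / π i j) := by
    have h : regObj C ε π' = regObj C ε π +
        ε * ∑ i, ∑ j, π i j * InformationTheory.klFun (π' i j / π i j) +
        ε * ∑ i, ∑ j, (π' i j - π i j) * Real.log (a i) +
        ε * ∑ i, ∑ j, (π' i j - π i j) * Real.log (b j) := by
      unfold regObj
      simp only [Finset.mul_sum, ← Finset.sum_add_distrib]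
      refine Finset.sum_congr rfl fun i _ => Finset.sum_congr rfl fun j _ => ?_
      rw [hkl]
      linear_combination (π' i j - π i j) * hlog i j
    rw [h, hA, hB]
    ring
  have hS : 0 ≤ ∑ i, ∑ j, π i j * InformationTheory.klFun (π' i j / π i j) :=
    Finset.sum_nonneg fun i _ => Finset.sum_nonneg fun j _ => hnn i j
  refine ⟨by rw [key]; nlinarith [mul_nonneg hε.le hS], fun heq => ?_⟩
  have hS0 : ∑ i, ∑ j, π i j * InformationTheory.klFun (π' i j / π i j) = 0 := by
    have : ε * ∑ i, ∑ j, π i j * InformationTheory.klFun (π' i j / π i j) = 0 := by linarith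
    exact (mul_eq_zero.mp this).resolve_left hε.ne'
  ext i j
  have h1 := (Finset.sum_eq_zero_iff_of_nonneg
    (fun i _ => Finset.sum_nonneg fun j _ => hnn i j)).mp hS0 i (Finset.mem_univ i)
  have h2 := (Finset.sum_eq_zero_iff_of_nonneg (fun j _ => hnn i j)).mp h1 j (Finset.mem_univ j)
  have h3 := (mul_eq_zero.mp h2).resolve_left (hpos i j).ne'
  rw [InformationTheory.klFun_eq_zero_iff (div_nonneg (hπ'.1 i j) (hpos i j).le)] at h3
  exact (div_eq_one_iff_eq (hpos i j).ne').mp h3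
end

section
/- Let C ∈ ℝ^{m×n}, ε > 0, ξ_{ij} = exp(−C_{ij}/ε), and let p ∈ ℝ^m, q ∈ ℝ^n have strictly positive entries with Σ_i p_i = Σ_j q_j. Then the (unique) minimizer π* of the regularized OT objective F_ε over the transportation polytope U(p,q) admits a scaling form: there exist vectors a ∈ ℝ^m and b ∈ ℝ^n with strictly positive entries such that π*_{ij} = ξ_{ij} a_i b_j for all (i,j). -/
open Finset

open Filter Topology in
lemma aux_tangent (s r : ℝ) (hs : 0 ≤ s) (hr : 0 < r) :
    r * (Real.log r - 1) - s * (Real.log s - 1) ≤ (r - s) * Real.log r := by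
  rcases hs.eq_or_lt with h | h
  · subst h
    nlinarith
  · have h1 := Real.log_le_sub_one_of_pos (div_pos hr h)
    rw [Real.log_div hr.ne' h.ne'] at h1
    have h2 := mul_le_mul_of_nonneg_left h1 hs
    have h3 : s * (r / s - 1) = r - s := by field_simp
    rw [h3] at h2
    nlinarith

lemma aux_single {m : ℕ} (i k : Fin m) (f : Fin m → ℝ) :
    ∑ a, ((Pi.single i 1 : Fin m → ℝ) a - (Pi.single k 1 : Fin m → ℝ) a) * f a = f i - f k := by
  simp [sub_mul, Finset.sum_sub_distrib, Pi.single_apply]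

lemma aux_pert {m n : ℕ} (C : Matrix (Fin m) (Fin n) ℝ) (ε : ℝ) (hε : 0 < ε)
    (p : Fin m → ℝ) (q : Fin n → ℝ)
    (x : Matrix (Fin m) (Fin n) ℝ)
    (hfeas : InPolytope p q x)
    (hopt : ∀ y, InPolytope p q y → regObj C ε x ≤ regObj C ε y)
    (i k : Fin m) (j l : Fin n) (hik : i ≠ k) (hjl : j ≠ l) (t : ℝ) (ht : 0 < t)
    (h1 : t < x i l) (h2 : t < x k j) :
    (C i l + ε * Real.log (x i l - t)) + (C k j + ε * Real.log (x k j - t)) ≤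
    (C i j + ε * Real.log (x i j + t)) + (C k l + ε * Real.log (x k l + t)) := by
  obtain ⟨hx, hr, hc⟩ := hfeas
  set u : Fin m → ℝ := fun a => (Pi.single i 1 : Fin m → ℝ) a - (Pi.single k 1 : Fin m → ℝ) a with hu
  set v : Fin n → ℝ := fun a => (Pi.single j 1 : Fin n → ℝ) a - (Pi.single l 1 : Fin n → ℝ) a with hv
  have hui : u i = 1 := by simp [hu, hik]
  have huk : u k = -1 := by simp [hu, hik.symm]
  have hvj : v j = 1 := by simp [hv, hjl]
  have hvl : v l = -1 := by simp [hv, hjl.symm]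
  have hu0 : ∀ a, a ≠ i → a ≠ k → u a = 0 := by
    intro a h h'
    simp [hu, h, h']
  have hv0 : ∀ a, a ≠ j → a ≠ l → v a = 0 := by
    intro a h h'
    simp [hv, h, h']
  have hus : ∑ a, u a = 0 := by
    have := aux_single i k (fun _ => 1)
    simpa [hu] using this
  have hvs : ∑ a, v a = 0 := by
    have := aux_single j l (fun _ => 1)
    simpa [hv] using this
  set y : Matrix (Fin m) (Fin n) ℝ := fun a b => x a b + t * (u a * v b) with hy
  have hcase : ∀ a b, u a * v b = 0 ∨ 0 < y a b := by
    intro a b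
    by_cases ha : a = i
    · by_cases hb : b = j
      · right; subst ha hb; simp only [hy, hui, hvj]; linarith [hx a b]
      · by_cases hb' : b = l
        · right; subst ha hb'; simp only [hy, hui, hvl]; linarith
        · left; simp [hv0 b hb hb']
    · by_cases ha' : a = k
      · by_cases hb : b = j
        · right; subst ha' hb; simp only [hy, huk, hvj]; linarith
        · by_cases hb' : b = l
          · right; subst ha' hb'; simp only [hy, huk, hvl]; linarith [hx a b]
          · left; simp [hv0 b hb hb']
      · left; simp [hu0 a ha ha']
  have hyf : InPolytope p q y := by
    refine ⟨fun a b => ?_, fun a => ?_, fun b => ?_⟩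
    · rcases hcase a b with h | h
      · simp only [hy, h]; simpa using hx a b
      · exact h.le
    · simp only [hy, Finset.sum_add_distrib, hr, ← Finset.mul_sum, hvs]; simp
    · simp only [hy, Finset.sum_add_distrib, hc, ← Finset.mul_sum, ← Finset.sum_mul, hus]; simp
  have hle := hopt y hyf
  have hreg : ∀ z, regObj C ε z = ∑ a, ∑ b, (C a b * z a b + ε * (z a b * (Real.log (z a b) - 1))) := by
    intro z
    simp only [regObj, Finset.sum_add_distrib, Finset.mul_sum]
  rw [hreg, hreg] at hle
  have hb : ∑ a, ∑ b, (C a b * y a b + ε * (y a b * (Real.log (y a b) - 1))) ≤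
      ∑ a, ∑ b, (C a b * x a b + ε * (x a b * (Real.log (x a b) - 1))) +
      t * ∑ a, u a * ∑ b, v b * (C a b + ε * Real.log (y a b)) := by
    simp only [Finset.mul_sum, ← Finset.sum_add_distrib]
    refine Finset.sum_le_sum fun a _ => Finset.sum_le_sum fun b _ => ?_
    have hyab : y a b = x a b + t * (u a * v b) := rfl
    rcases hcase a b with h | h
    · have : y a b = x a b := by rw [hyab, h]; ring
      rw [this]
      have : t * (u a * (v b * (C a b + ε * Real.log (x a b)))) =
        t * (u a * v b) * (C a b + ε * Real.log (x a b)) := by ring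
      rw [this, h]; simp
    · have h3 := mul_le_mul_of_nonneg_left (aux_tangent (x a b) (y a b) (hx a b) h) hε.le
      have h4 : t * (u a * (v b * (C a b + ε * Real.log (y a b)))) =
        (y a b - x a b) * (C a b + ε * Real.log (y a b)) := by rw [hyab]; ring
      rw [h4]
      linarith
  have h5 : 0 ≤ t * ∑ a, u a * ∑ b, v b * (C a b + ε * Real.log (y a b)) := by linarith
  have h6 := nonneg_of_mul_nonneg_right h5 ht
  simp only [hu, hv, aux_single] at h6
  have e1 : y i j = x i j + t := by simp [hy, hui, hvj]
  have e2 : y i l = x i l - t := by simp [hy, hui, hvl]; ring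
  have e3 : y k j = x k j - t := by simp [hy, huk, hvj]; ring
  have e4 : y k l = x k l + t := by simp [hy, huk, hvl]
  rw [e1, e2, e3, e4] at h6
  linarith

open Filter Topology in
lemma aux_cross {m n : ℕ} (C : Matrix (Fin m) (Fin n) ℝ) (ε : ℝ) (hε : 0 < ε)
    (p : Fin m → ℝ) (q : Fin n → ℝ)
    (x : Matrix (Fin m) (Fin n) ℝ)
    (hfeas : InPolytope p q x)
    (hopt : ∀ y, InPolytope p q y → regObj C ε x ≤ regObj C ε y)
    (i k : Fin m) (j l : Fin n) :
    (Real.exp (C i l / ε) * x i l) * (Real.exp (C k j / ε) * x k j) ≤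
    (Real.exp (C i j / ε) * x i j) * (Real.exp (C k l / ε) * x k l) := by
  by_cases hik : i = k
  · subst hik; exact le_of_eq (by ring)
  by_cases hjl : j = l
  · subst hjl; exact le_rfl
  have hx := hfeas.1
  have hR : 0 ≤ (Real.exp (C i j / ε) * x i j) * (Real.exp (C k l / ε) * x k l) := by
    have := hx i j
    have := hx k l
    positivity
  rcases (hx i l).eq_or_lt with h | hil
  · rw [← h]; simpa using hR
  rcases (hx k j).eq_or_lt with h | hkj
  · rw [← h]; simpa using hR
  have hL : Tendsto (fun t : ℝ => (Real.exp (C i l / ε) * (x i l - t)) * (Real.exp (C k j / ε) * (x k j - t)))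
      (𝓝[>] 0) (𝓝 ((Real.exp (C i l / ε) * (x i l - 0)) * (Real.exp (C k j / ε) * (x k j - 0)))) :=
    (Continuous.tendsto (by fun_prop) 0).mono_left nhdsWithin_le_nhds
  have hR' : Tendsto (fun t : ℝ => (Real.exp (C i j / ε) * (x i j + t)) * (Real.exp (C k l / ε) * (x k l + t)))
      (𝓝[>] 0) (𝓝 ((Real.exp (C i j / ε) * (x i j + 0)) * (Real.exp (C k l / ε) * (x k l + 0)))) :=
    (Continuous.tendsto (by fun_prop) 0).mono_left nhdsWithin_le_nhds
  simp only [sub_zero] at hL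
  simp only [add_zero] at hR'
  refine le_of_tendsto_of_tendsto hL hR' ?_
  filter_upwards [Ioo_mem_nhdsGT (lt_min hil hkj)] with t ht
  have ht0 : 0 < t := ht.1
  have h1 : t < x i l := ht.2.trans_le (min_le_left _ _)
  have h2 : t < x k j := ht.2.trans_le (min_le_right _ _)
  have key := aux_pert C ε hε p q x hfeas hopt i k j l hik hjl t ht0 h1 h2
  have hexp : ∀ c r : ℝ, 0 < r → Real.exp (c / ε) * r = Real.exp ((c + ε * Real.log r) / ε) := by
    intro c r hr
    rw [add_div, mul_div_cancel_left₀ _ hε.ne', Real.exp_add, Real.exp_log hr]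
  rw [hexp _ _ (sub_pos.2 h1), hexp _ _ (sub_pos.2 h2), hexp _ (x i j + t) (by linarith [hx i j]),
    hexp _ (x k l + t) (by linarith [hx k l]), ← Real.exp_add, ← Real.exp_add, ← add_div, ← add_div]
  gcongr

/-- for balanced strictly positive marginals, any minimizer of
`F_ε` over `U(p, q)` admits a Sinkhorn scaling form `π*_{ij} = ξ_{ij} a_i b_j`
with positive vectors `a` and `b`, where `ξ` is the Gibbs kernel. -/
theorem stmt_14 (m n : ℕ) (C : Matrix (Fin m) (Fin n) ℝ) (ε : ℝ) (hε : 0 < ε)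
    (ξ : Matrix (Fin m) (Fin n) ℝ) (hξ : ∀ i j, ξ i j = Real.exp (-(C i j) / ε))
    (p : Fin m → ℝ) (q : Fin n → ℝ) (hp : ∀ i, 0 < p i) (hq : ∀ j, 0 < q j)
    (hbal : ∑ i, p i = ∑ j, q j)
    (xstar : Matrix (Fin m) (Fin n) ℝ)
    (hfeas : InPolytope p q xstar)
    (hopt : ∀ x, InPolytope p q x → regObj C ε xstar ≤ regObj C ε x) :
    ∃ (a : Fin m → ℝ) (b : Fin n → ℝ),
      (∀ i, 0 < a i) ∧ (∀ j, 0 < b j) ∧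
        ∀ i j, xstar i j = ξ i j * a i * b j := by
  set w : Fin m → Fin n → ℝ := fun i j => Real.exp (C i j / ε) * xstar i j with hw
  have hx := hfeas.1
  have hw0 : ∀ i j, 0 ≤ w i j := fun i j => mul_nonneg (Real.exp_pos _).le (hx i j)
  have hcr : ∀ i k j l, w i j * w k l = w i l * w k j := fun i k j l =>
    le_antisymm (aux_cross C ε hε p q xstar hfeas hopt i k l j)
      (aux_cross C ε hε p q xstar hfeas hopt i k j l)
  have hrow : ∀ i, 0 < ∑ l, w i l := by
    intro i
    have h := hp i
    rw [← hfeas.2.1 i] at h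
    obtain ⟨l, _, hl⟩ := Finset.exists_lt_of_sum_lt (s := Finset.univ) (f := fun _ => (0 : ℝ)) (g := fun l => xstar i l) (by simpa using h)
    exact Finset.sum_pos' (fun l _ => hw0 i l) ⟨l, Finset.mem_univ _, mul_pos (Real.exp_pos _) hl⟩
  have hcol : ∀ j, 0 < ∑ k, w k j := by
    intro j
    have h := hq j
    rw [← hfeas.2.2 j] at h
    obtain ⟨l, _, hl⟩ := Finset.exists_lt_of_sum_lt (s := Finset.univ) (f := fun _ => (0 : ℝ)) (g := fun l => xstar l j) (by simpa using h)
    exact Finset.sum_pos' (fun l _ => hw0 l j) ⟨l, Finset.mem_univ _, mul_pos (Real.exp_pos _) hl⟩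
  have hW : ∀ _ : Fin n, 0 < ∑ l, ∑ k, w k l := fun j =>
    Finset.sum_pos (fun l _ => hcol l) ⟨j, Finset.mem_univ _⟩
  refine ⟨fun i => ∑ l, w i l, fun j => (∑ k, w k j) / ∑ l, ∑ k, w k l, hrow,
    fun j => div_pos (hcol j) (hW j), fun i j => ?_⟩
  have hs : w i j * ∑ l, ∑ k, w k l = (∑ l, w i l) * ∑ k, w k j := by
    simp only [Finset.mul_sum, Finset.sum_mul]
    rw [Finset.sum_comm]
    exact Finset.sum_congr rfl fun k _ => Finset.sum_congr rfl fun l _ => hcr i k j l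
  have hWj := (hW j).ne'
  have h2 : w i j = (∑ l, w i l) * ((∑ k, w k j) / ∑ l, ∑ k, w k l) := by
    rw [← mul_div_assoc, ← hs, mul_div_cancel_right₀ _ hWj]
  have h3 : xstar i j = ξ i j * w i j := by
    simp only [hw]
    rw [hξ, ← mul_assoc, ← Real.exp_add, neg_div, neg_add_cancel, Real.exp_zero, one_mul]
  rw [mul_assoc, ← h2, h3]
end

section
/- Let C ∈ ℝ^{m×n} and let p ∈ ℝ^m, q ∈ ℝ^n have nonnegative entries with Σ_i p_i = Σ_j q_j and U(p,q) nonempty. Let ε_k > 0 be a sequence with ε_k → 0, and for each k let π^k be a minimizer of the regularized OT objective F_{ε_k} over U(p,q). If π^k converges to a matrix π̄ as k → ∞, then π̄ ∈ U(p,q) and π̄ minimizes the unregularized OT cost Σ_{ij} C_{ij} x_{ij} over U(p,q). -/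
open Finset Filter Topology

/-- if `ε_k → 0`, `π^k` minimizes `F_{ε_k}` over `U(p, q)` for each
`k`, and `π^k → π̄`, then `π̄ ∈ U(p, q)` and `π̄` minimizes the unregularized OT
cost `∑_{ij} C_{ij} x_{ij}` over `U(p, q)`. -/
theorem stmt_15 (m n : ℕ) (C : Matrix (Fin m) (Fin n) ℝ)
    (p : Fin m → ℝ) (q : Fin n → ℝ) (hp : ∀ i, 0 ≤ p i) (hq : ∀ j, 0 ≤ q j)
    (hbal : ∑ i, p i = ∑ j, q j)
    (hne : ∃ x : Matrix (Fin m) (Fin n) ℝ, InPolytope p q x)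
    (ε : ℕ → ℝ) (hε : ∀ k, 0 < ε k) (hε0 : Tendsto ε atTop (𝓝 0))
    (π : ℕ → Matrix (Fin m) (Fin n) ℝ)
    (hfeas : ∀ k, InPolytope p q (π k))
    (hopt : ∀ k, ∀ x, InPolytope p q x → regObj C (ε k) (π k) ≤ regObj C (ε k) x)
    (πbar : Matrix (Fin m) (Fin n) ℝ)
    (hlim : Tendsto π atTop (𝓝 πbar)) :
    InPolytope p q πbar ∧
      ∀ x, InPolytope p q x →
        ∑ i, ∑ j, C i j * πbar i j ≤ ∑ i, ∑ j, C i j * x i j := by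
  have hent : ∀ i j, Tendsto (fun k => π k i j) atTop (𝓝 (πbar i j)) := fun i j =>
    ((continuous_id.matrix_elem i j).tendsto πbar).comp hlim
  refine ⟨⟨fun i j => ge_of_tendsto' (hent i j) fun k => (hfeas k).1 i j, fun i => ?_,
    fun j => ?_⟩, fun x hx => ?_⟩
  · refine tendsto_nhds_unique (tendsto_finsetSum _ fun j _ => hent i j) ?_
    simp only [fun k => (hfeas k).2.1 i]
    exact tendsto_const_nhds
  · refine tendsto_nhds_unique (tendsto_finsetSum _ fun i _ => hent i j) ?_
    simp only [fun k => (hfeas k).2.2 j]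
    exact tendsto_const_nhds
  · have hphi : Continuous fun t : ℝ => t * (Real.log t - 1) := by
      have h := Real.continuous_mul_log.sub continuous_id
      refine h.congr fun t => ?_
      change t * Real.log t - t = _
      ring
    have h1 : Tendsto (fun k => regObj C (ε k) (π k)) atTop
        (𝓝 (∑ i, ∑ j, C i j * πbar i j
          + 0 * ∑ i, ∑ j, πbar i j * (Real.log (πbar i j) - 1))) := by
      refine Tendsto.add ?_ (hε0.mul ?_)
      · exact tendsto_finsetSum _ fun i _ => tendsto_finsetSum _ fun j _ =>
          (hent i j).const_mul _
      · exact tendsto_finsetSum _ fun i _ => tendsto_finsetSum _ fun j _ =>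
          (hphi.tendsto (πbar i j)).comp (hent i j)
    have h2 : Tendsto (fun k => regObj C (ε k) x) atTop
        (𝓝 (∑ i, ∑ j, C i j * x i j
          + 0 * ∑ i, ∑ j, x i j * (Real.log (x i j) - 1))) :=
      tendsto_const_nhds.add (hε0.mul tendsto_const_nhds)
    have h := le_of_tendsto_of_tendsto' h1 h2 fun k => hopt k x hx
    simpa using h
end

section
/- Let C ∈ ℝ^{m×n} and let p ∈ ℝ^m, q ∈ ℝ^n have nonnegative entries with Σ_i p_i = Σ_j q_j and U(p,q) nonempty. Then the optimal value of the regularized OT problem converges to the optimal value of the OT problem as the regularization vanishes: min_{π ∈ U(p,q)} F_ε(π) → min_{x ∈ U(p,q)} Σ_{ij} C_{ij} x_{ij} as ε → 0⁺. -/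
open Finset Filter Topology

/-- for balanced nonnegative marginals with nonempty `U(p, q)`,
the optimal value of the regularized OT problem converges, as `ε → 0⁺`, to the
optimal value of the (unregularized) OT problem. -/
theorem stmt_16 (m n : ℕ) (C : Matrix (Fin m) (Fin n) ℝ)
    (p : Fin m → ℝ) (q : Fin n → ℝ) (hp : ∀ i, 0 ≤ p i) (hq : ∀ j, 0 ≤ q j)
    (hbal : ∑ i, p i = ∑ j, q j)
    (hne : ∃ x : Matrix (Fin m) (Fin n) ℝ, InPolytope p q x) :
    Tendsto (fun ε : ℝ => sInf ((regObj C ε) '' {x | InPolytope p q x}))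
      (𝓝[>] 0)
      (𝓝 (sInf ((fun x : Matrix (Fin m) (Fin n) ℝ => ∑ i, ∑ j, C i j * x i j) ''
        {x | InPolytope p q x}))) := by
  set S : Set (Matrix (Fin m) (Fin n) ℝ) := {x | InPolytope p q x} with hS
  set f : Matrix (Fin m) (Fin n) ℝ → ℝ := fun x => ∑ i, ∑ j, C i j * x i j with hf
  set H : Matrix (Fin m) (Fin n) ℝ → ℝ :=
    fun x => ∑ i, ∑ j, x i j * (Real.log (x i j) - 1) with hH
  have hreg : ∀ ε x, regObj C ε x = f x + ε * H x := fun ε x => rfl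
  have hSne : S.Nonempty := hne
  have hle : ∀ x ∈ S, ∀ i j, x i j ≤ p i := by
    intro x hx i j
    rw [← hx.2.1 i]
    exact Finset.single_le_sum (f := fun j => x i j) (fun k _ => hx.1 i k) (Finset.mem_univ j)
  have hfb : ∀ x ∈ S, -(∑ i, ∑ j : Fin n, |C i j| * p i) ≤ f x := by
    intro x hx
    rw [← Finset.sum_neg_distrib]
    refine Finset.sum_le_sum fun i _ => ?_
    rw [← Finset.sum_neg_distrib]
    refine Finset.sum_le_sum fun j _ => ?_
    have h1 := hle x hx i j
    have h0 := hx.1 i j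
    have h2 := neg_abs_le (C i j)
    have h3 := abs_nonneg (C i j)
    nlinarith
  have hHb : ∃ M, ∀ x ∈ S, |H x| ≤ M := by
    refine ⟨∑ i, ∑ j : Fin n, (1 + p i ^ 2), fun x hx => ?_⟩
    refine (Finset.abs_sum_le_sum_abs _ _).trans (Finset.sum_le_sum fun i _ => ?_)
    refine (Finset.abs_sum_le_sum_abs _ _).trans (Finset.sum_le_sum fun j _ => ?_)
    have h1 := hle x hx i j
    rcases (hx.1 i j).eq_or_lt with h0 | h0
    · rw [← h0]; simp; positivity
    · have h2 := Real.log_le_sub_one_of_pos h0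
      have h3 := Real.one_sub_inv_le_log_of_pos h0
      have h4 : x i j * (x i j)⁻¹ = 1 := mul_inv_cancel₀ h0.ne'
      rw [abs_le]
      constructor
      · nlinarith [mul_le_mul_of_nonneg_left h3 h0.le, sq_nonneg (p i)]
      · nlinarith [mul_le_mul_of_nonneg_left h2 h0.le]
  obtain ⟨M, hM⟩ := hHb
  have hbd : BddBelow (f '' S) := ⟨_, by rintro _ ⟨x, hx, rfl⟩; exact hfb x hx⟩
  have key : ∀ ε : ℝ, 0 < ε → sInf (f '' S) - ε * M ≤ sInf (regObj C ε '' S) ∧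
      sInf (regObj C ε '' S) ≤ sInf (f '' S) + ε * M := by
    intro ε hε
    have hb : ∀ y ∈ regObj C ε '' S, sInf (f '' S) - ε * M ≤ y := by
      rintro _ ⟨x, hx, rfl⟩
      rw [hreg]
      have h1 := csInf_le hbd ⟨x, hx, rfl⟩
      have h2 := (abs_le.1 (hM x hx)).1
      nlinarith
    refine ⟨le_csInf (hSne.image _) hb, ?_⟩
    rw [← sub_le_iff_le_add]
    refine le_csInf (hSne.image _) ?_
    rintro _ ⟨x, hx, rfl⟩
    have h1 : sInf (regObj C ε '' S) ≤ regObj C ε x := csInf_le ⟨_, hb⟩ ⟨x, hx, rfl⟩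
    rw [hreg] at h1
    have h2 := (abs_le.1 (hM x hx)).2
    nlinarith
  have hl : Tendsto (fun ε : ℝ => sInf (f '' S) - ε * M) (𝓝[>] 0) (𝓝 (sInf (f '' S))) := by
    have : Continuous (fun ε : ℝ => sInf (f '' S) - ε * M) := by fun_prop
    simpa using (this.tendsto 0).mono_left nhdsWithin_le_nhds
  have hu : Tendsto (fun ε : ℝ => sInf (f '' S) + ε * M) (𝓝[>] 0) (𝓝 (sInf (f '' S))) := by
    have : Continuous (fun ε : ℝ => sInf (f '' S) + ε * M) := by fun_prop
    simpa using (this.tendsto 0).mono_left nhdsWithin_le_nhds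
  refine tendsto_of_tendsto_of_tendsto_of_le_of_le' hl hu ?_ ?_
  · filter_upwards [self_mem_nhdsWithin] with ε hε using (key ε hε).1
  · filter_upwards [self_mem_nhdsWithin] with ε hε using (key ε hε).2
end
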